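/- arXiv:0811.1574 — 2 statements merged into one kernel-verified Lean document; each statement's English description precedes it below -/
import Mathlib

section
/- Let k be a field, A an associative unital k-algebra, and I a two-sided ideal of A with I·I = I that is projective as a right A-module. Then for all right A/I-modules M and N with M finitely generated, and for every n ≥ 0, there is an isomorphism Ext^n_A(M, N) ≅ Ext^n_{A/I}(M, N). -/
open CategoryTheory

/-!
Restriction of scalars along `A → A/I` is exact and fully faithful, so it induces maps
`Ext^n_{A/I}(M, N) → Ext^n_A(M, N)`, bijective for `n = 0`. Covering `M` by a free `A/I`-module `F`
and shifting dimensions, they are bijective for all `n` as soon as `Ext^{n+1}_A(F, N) = 0`. Since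
`I` is projective, `0 → I^(X) → A^(X) → F → 0` is a projective resolution of the free module `F` on
`X`, and its kernel contributes nothing because `Hom_A(I, N) = Hom_A(I/I², N) = 0`.
-/

universe u v w u' v' w'

section DerivedFunctorExt

variable {C : Type u} [Category.{v} C] [Abelian C] [HasExt.{w} C] {X Y : C}

lemma eq_zero_of_extMk_zero_eq_zero (P : ProjectiveResolution X) (f : P.complex.X 0 ⟶ Y)
    (hf : P.complex.d 1 0 ≫ f = 0) (h : P.extMk f 1 rfl hf = 0) : f = 0 := by
  simp only [← P.extEquivCohomologyClass.apply_eq_iff_eq,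
    ProjectiveResolution.extEquivCohomologyClass_extMk,
    ProjectiveResolution.extEquivCohomologyClass_zero,
    CochainComplex.HomComplex.CohomologyClass.mk_eq_zero_iff] at h
  rw [CochainComplex.HomComplex.Cocycle.toSingleMk_mem_coboundaries_iff _ _ _ _ _ 1 (by simp)] at h
  obtain ⟨g, hg⟩ := h
  rw [(P.cochainComplex.isZero_of_isStrictlyLE 0 1).eq_of_src g 0, Limits.comp_zero, eq_comm] at hg
  exact (Preadditive.IsIso.comp_left_eq_zero _ _).1 hg

-- `prev 0 = 0` for `ComplexShape.up ℕ`, and the differential from degree `0` to itself vanishes.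
lemma extMk_eq_zero_iff_exists_d_prev (P : ProjectiveResolution X) {n : ℕ}
    (f : P.complex.X n ⟶ Y) (m : ℕ) (hm : n + 1 = m) (hf : P.complex.d m n ≫ f = 0) :
    P.extMk f m hm hf = 0 ↔
      ∃ g : P.complex.X ((ComplexShape.up ℕ).prev n) ⟶ Y, P.complex.d n _ ≫ g = f := by
  subst hm
  cases n with
  | zero =>
    refine ⟨fun h ↦ ⟨0, ?_⟩, ?_⟩
    · rw [Limits.comp_zero, eq_zero_of_extMk_zero_eq_zero P f hf h]
    · rintro ⟨g, rfl⟩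
      simp
  | succ n => exact P.extMk_eq_zero_iff f _ rfl hf _ (by simp)

variable (R : Type*) [Ring R] [Linear R C]

lemma extMk_smul (P : ProjectiveResolution X) {n : ℕ} (r : R)
    (f : P.complex.X n ⟶ Y) (m : ℕ) (hm : n + 1 = m) (hf : P.complex.d m n ≫ f = 0) :
    P.extMk (r • f) m hm (by rw [Linear.comp_smul, hf, smul_zero]) = r • P.extMk f m hm hf := by
  rw [Abelian.Ext.smul_eq_comp_mk₀, P.extMk_comp_mk₀]
  simp

/-- The map from `n`-cocycles of `Hom(P, Y)`, for a projective resolution `P` of `X`, to the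
Yoneda group `Abelian.Ext X Y n`. It induces the comparison between `Ext` as a derived functor and
`Abelian.Ext`. -/
noncomputable def cocycleToExt (P : ProjectiveResolution X) (Y : C) (n : ℕ) :
    LinearMap.ker ((P.complex.linearYonedaObj R Y).sc n).g.hom →ₗ[R] Abelian.Ext X Y n where
  toFun f := P.extMk f.1 _ (CochainComplex.next ℕ n).symm f.2
  map_add' f g := (P.add_extMk f.1 g.1 _ _ f.2 g.2).symm
  map_smul' r f := extMk_smul R P r f.1 _ _ f.2

lemma cocycleToExt_surjective (P : ProjectiveResolution X) (Y : C) (n : ℕ) :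
    Function.Surjective (cocycleToExt R P Y n) := fun α ↦
  have ⟨f, hf, hα⟩ := P.extMk_surjective α _ (CochainComplex.next ℕ n).symm
  ⟨⟨f, hf⟩, hα⟩

lemma ker_cocycleToExt (P : ProjectiveResolution X) (Y : C) (n : ℕ) :
    LinearMap.ker (cocycleToExt R P Y n) =
      LinearMap.range ((P.complex.linearYonedaObj R Y).sc n).moduleCatToCycles := by
  ext f
  exact (extMk_eq_zero_iff_exists_d_prev P f.1 _ (CochainComplex.next ℕ n).symm f.2).trans
    (exists_congr fun g ↦ ⟨fun h ↦ Subtype.ext h, congrArg Subtype.val⟩)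

/-- The `Ext` functor defined by left-deriving `Hom(-, Y)` agrees with the Yoneda groups
`Abelian.Ext`. -/
noncomputable def derivedExtLinearEquiv [EnoughProjectives C] (X Y : C) (n : ℕ) :
    ((Ext R C n).obj (Opposite.op X)).obj Y ≃ₗ[R] Abelian.Ext X Y n :=
  let P := ProjectiveResolution.of X
  (P.isoExt n Y ≪≫ ((P.complex.linearYonedaObj R Y).sc n).moduleCatHomologyIso).toLinearEquiv ≪≫ₗ
    Submodule.quotEquivOfEq _ _ (ker_cocycleToExt R P Y n).symm ≪≫ₗ
    LinearMap.quotKerEquivOfSurjective _ (cocycleToExt_surjective R P Y n)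

end DerivedFunctorExt

section ExactFunctor

variable {C : Type u} [Category.{v} C] [Abelian C] [HasExt.{w} C]

lemma subsingleton_ext_succ_of_shortExact {S : ShortComplex C} (hS : S.ShortExact)
    [Projective S.X₁] [Projective S.X₂] {Y : C} (hY : ∀ g : S.X₁ ⟶ Y, g = 0) (n : ℕ) :
    Subsingleton (Abelian.Ext S.X₃ Y (n + 1)) := by
  have : Subsingleton (S.X₁ ⟶ Y) := ⟨fun g h ↦ (hY g).trans (hY h).symm⟩
  have : Subsingleton (Abelian.Ext S.X₁ Y n) := by
    cases n with
    | zero => exact Abelian.Ext.homEquiv₀.subsingleton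
    | succ n => exact Abelian.Ext.subsingleton_of_projective S.X₁ Y n
  have : Subsingleton (Abelian.Ext S.X₂ Y (n + 1)) :=
    Abelian.Ext.subsingleton_of_projective S.X₂ Y n
  refine subsingleton_of_forall_eq 0 fun x ↦ ?_
  obtain ⟨y, rfl⟩ := Abelian.Ext.contravariant_sequence_exact₃ hS Y x (Subsingleton.elim _ _)
    (add_comm 1 n)
  rw [Subsingleton.elim y 0, Abelian.Ext.comp_zero]

variable {D : Type u'} [Category.{v'} D] [Abelian D] [HasExt.{w'} D]

attribute [local simp] Abelian.Ext.mapExactFunctor_comp Abelian.Ext.mapExactFunctor_mk₀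
  Abelian.Ext.mapExactFunctor_extClass in
lemma mapExtAddHom_bijective_of_acyclic_covers (F : C ⥤ D) [F.Additive]
    [Limits.PreservesFiniteLimits F] [Limits.PreservesFiniteColimits F] [F.Full] [F.Faithful]
    {Y : C} (hF : ∀ X : C, ∃ (P : C) (p : P ⟶ X), Epi p ∧
      (∀ n, Subsingleton (Abelian.Ext P Y (n + 1))) ∧
      ∀ n, Subsingleton (Abelian.Ext (F.obj P) (F.obj Y) (n + 1))) (X : C) (n : ℕ) :
    Function.Bijective (F.mapExtAddHom X Y n) := by
  induction n generalizing X with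
  | zero =>
    simpa [Abelian.Ext.mapExactFunctor₀] using
      ⟨Functor.Faithful.map_injective, Functor.Full.map_surjective⟩
  | succ n hn =>
    obtain ⟨P, p, _, hP, hFP⟩ := hF X
    let S := ShortComplex.mk _ _ (Limits.kernel.condition p)
    have hS : S.ShortExact := { exact := ShortComplex.exact_kernel p }
    have : Subsingleton (Abelian.Ext S.X₂ Y (n + 1)) := hP n
    have : Subsingleton (Abelian.Ext (S.map F).X₂ (F.obj Y) (n + 1)) := hFP n
    exact AddMonoidHom.bijective_of_surjective_of_bijective_of_right_exact _ _ _ _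
      (F.mapExtAddHom S.X₂ Y n) (F.mapExtAddHom S.X₁ Y n) (F.mapExtAddHom S.X₃ Y (n + 1))
      (by cat_disch) (by cat_disch)
      ((ShortComplex.ab_exact_iff_function_exact _).1
        (Abelian.Ext.contravariant_sequence_exact₁' hS Y n (n + 1) (add_comm 1 n)))
      ((ShortComplex.ab_exact_iff_function_exact _).1
        (Abelian.Ext.contravariant_sequence_exact₁' (hS.map F) (F.obj Y) n (n + 1)
          (add_comm 1 n)))
      (hn _).surjective (hn _)
      (fun x ↦ Abelian.Ext.contravariant_sequence_exact₃ hS _ x (Subsingleton.elim _ _)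
        (add_comm 1 n))
      (fun x ↦ Abelian.Ext.contravariant_sequence_exact₃ (hS.map F) _ x (Subsingleton.elim _ _)
        (add_comm 1 n))

end ExactFunctor

section Modules

variable {R : Type*} [Semiring R]

lemma linearMap_eq_zero_of_isIdempotentElem {J : Ideal R} (hJ : IsIdempotentElem J)
    {N : Type*} [AddCommMonoid N] [Module R N] (hN : J ≤ Module.annihilator R N)
    (φ : J →ₗ[R] N) : φ = 0 := by
  have map_mul (x : R) (hx : x ∈ J * J) : φ ⟨x, Ideal.mul_le_right hx⟩ = 0 := by
    induction hx using Submodule.mul_induction_on' with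
    | mem_mul_mem a ha b hb =>
      exact (φ.map_smul a ⟨b, hb⟩).trans (Module.mem_annihilator.1 (hN ha) _)
    | add x hx y hy hx0 hy0 =>
      have := φ.map_add ⟨x, Ideal.mul_le_right hx⟩ ⟨y, Ideal.mul_le_right hy⟩
      rwa [hx0, hy0, add_zero] at this
  ext x
  exact map_mul x (hJ.eq.symm ▸ x.2)

lemma projective_finsupp (X M : Type*) [AddCommMonoid M] [Module R M] [Module.Projective R M] :
    Module.Projective R (X →₀ M) := by
  classical exact .of_equiv (finsuppLequivDFinsupp R (ι := X) (M := M)).symm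

lemma exact_finsupp_mapRange {X M N P : Type*} [Zero M] [Zero N] [Zero P] {f : M → N} {g : N → P}
    (hf : f 0 = 0) (hg : g 0 = 0) (h : Function.Exact f g) :
    Function.Exact (Finsupp.mapRange (α := X) f hf) (Finsupp.mapRange (α := X) g hg) := fun y ↦ by
  rw [Finsupp.range_mapRange]
  exact DFunLike.ext_iff.trans (forall_congr' fun x ↦ h (y x))

end Modules

section RestrictScalars

variable {R S : Type*} [Ring R] [Ring S]

lemma restrictScalars_preservesFiniteLimits_and_finiteColimits (f : R →+* S) :
    Limits.PreservesFiniteLimits (ModuleCat.restrictScalars.{w} f) ∧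
      Limits.PreservesFiniteColimits (ModuleCat.restrictScalars.{w} f) := by
  refine ((Functor.exact_tfae (ModuleCat.restrictScalars.{w} f)).out 1 3).1 fun T hT ↦ ?_
  rw [ShortComplex.ShortExact.moduleCat_exact_iff_function_exact] at hT ⊢
  exact hT

instance restrictScalars_preservesFiniteLimits (f : R →+* S) :
    Limits.PreservesFiniteLimits (ModuleCat.restrictScalars.{w} f) :=
  (restrictScalars_preservesFiniteLimits_and_finiteColimits f).1

instance restrictScalars_preservesFiniteColimits (f : R →+* S) :
    Limits.PreservesFiniteColimits (ModuleCat.restrictScalars.{w} f) :=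
  (restrictScalars_preservesFiniteLimits_and_finiteColimits f).2

lemma restrictScalars_full_of_surjective {f : R →+* S} (hf : Function.Surjective f) :
    (ModuleCat.restrictScalars.{w} f).Full where
  map_surjective g :=
    ⟨ModuleCat.ofHom
      { toFun := g.hom
        map_add' := g.hom.map_add
        map_smul' := hf.forall.2 fun r ↦ g.hom.map_smul r }, rfl⟩

lemma ker_le_annihilator_restrictScalars (f : R →+* S) (N : ModuleCat.{w} S) :
    RingHom.ker f ≤ Module.annihilator R ((ModuleCat.restrictScalars f).obj N) := fun _ hr ↦
  Module.mem_annihilator.2 fun y ↦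
    (congrArg (fun s : S ↦ (s • y : N)) (RingHom.mem_ker.1 hr)).trans (zero_smul S (y : N))

end RestrictScalars

section IdempotentKernel

variable {R S : Type u} [Ring R] [Ring S]

/-- The short complex `(ker f)^(X) ⟶ R^(X) ⟶ S^(X)` of `R`-modules attached to a ring homomorphism
`f : R →+* S`, which resolves the free `S`-module on `X`. -/
noncomputable def kerFreeShortComplex (f : R →+* S) (X : Type (max u v)) :
    ShortComplex (ModuleCat.{max u v} R) where
  X₁ := ModuleCat.of R (X →₀ RingHom.ker f)
  X₂ := ModuleCat.of R (X →₀ R)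
  X₃ := (ModuleCat.restrictScalars f).obj (ModuleCat.of S (X →₀ S))
  f := ModuleCat.ofHom (Finsupp.mapRange.linearMap (RingHom.ker f).subtype)
  g := ModuleCat.semilinearMapAddEquiv f _ _ (Finsupp.mapRange.linearMap f.toSemilinearMap)
  zero := ModuleCat.hom_ext <| LinearMap.ext fun y ↦ Finsupp.ext fun x ↦
    ((y : X →₀ RingHom.ker f) x).2

lemma kerFreeShortComplex_shortExact {f : R →+* S} (hf : Function.Surjective f)
    (X : Type (max u v)) : (kerFreeShortComplex f X).ShortExact := by
  have exact_ker : Function.Exact (RingHom.ker f).subtype f := fun r ↦ by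
    simp [RingHom.mem_ker]
  refine ModuleCat.shortComplex_shortExact _ ?_ ?_ ?_
  · exact exact_finsupp_mapRange rfl f.map_zero exact_ker
  · exact Finsupp.mapRange_injective _ rfl Subtype.val_injective
  · exact Finsupp.mapRange_surjective _ f.map_zero hf

lemma subsingleton_ext_restrictScalars_free {f : R →+* S} (hf : Function.Surjective f)
    (hidem : IsIdempotentElem (RingHom.ker f)) [Module.Projective R (RingHom.ker f)]
    (X : Type (max u v)) (N : ModuleCat.{max u v} S) (n : ℕ) :
    Subsingleton (Abelian.Ext ((ModuleCat.restrictScalars f).obj (ModuleCat.of S (X →₀ S)))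
      ((ModuleCat.restrictScalars f).obj N) (n + 1)) := by
  have : Projective (kerFreeShortComplex f X).X₁ :=
    have := projective_finsupp (R := R) X (RingHom.ker f)
    ModuleCat.projective_of_categoryTheory_projective (.of R (X →₀ RingHom.ker f))
  have : Projective (kerFreeShortComplex f X).X₂ :=
    ModuleCat.projective_of_free (Finsupp.basisSingleOne (R := R) (ι := X))
  refine subsingleton_ext_succ_of_shortExact (kerFreeShortComplex_shortExact hf X) (fun g ↦ ?_) n
  exact ModuleCat.hom_ext <| Finsupp.lhom_ext' fun x ↦
    linearMap_eq_zero_of_isIdempotentElem hidem (ker_le_annihilator_restrictScalars f N) _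

theorem mapExtAddHom_restrictScalars_bijective {f : R →+* S} (hf : Function.Surjective f)
    (hidem : IsIdempotentElem (RingHom.ker f)) [Module.Projective R (RingHom.ker f)]
    (M N : ModuleCat.{max u v} S) (n : ℕ) :
    Function.Bijective ((ModuleCat.restrictScalars f).mapExtAddHom M N n) := by
  have := restrictScalars_full_of_surjective hf
  refine mapExtAddHom_bijective_of_acyclic_covers _ (fun X ↦ ?_) M n
  have : Projective (ModuleCat.of S (X →₀ S)) :=
    ModuleCat.projective_of_free Finsupp.basisSingleOne
  exact ⟨ModuleCat.of S (X →₀ S), ModuleCat.ofHom (Finsupp.linearCombination S id),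
    (ModuleCat.epi_iff_surjective _).2 (Finsupp.linearCombination_id_surjective S X),
    Abelian.Ext.subsingleton_of_projective _ N,
    subsingleton_ext_restrictScalars_free hf hidem X N⟩

open scoped ModuleCat.Algebra

variable (k : Type*) [CommRing k] [Algebra k R] [Algebra k S]

theorem nonempty_ext_restrictScalars_iso {f : R →ₐ[k] S} (hf : Function.Surjective f)
    (hidem : IsIdempotentElem (RingHom.ker f.toRingHom))
    [Module.Projective R (RingHom.ker f.toRingHom)] (M N : ModuleCat.{max u v} S) (n : ℕ) :
    Nonempty
      (((Ext k (ModuleCat R) n).obj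
          (Opposite.op ((ModuleCat.restrictScalars f.toRingHom).obj M))).obj
          ((ModuleCat.restrictScalars f.toRingHom).obj N) ≅
        ((Ext k (ModuleCat S) n).obj (Opposite.op M)).obj N) :=
  ⟨(derivedExtLinearEquiv k _ _ n ≪≫ₗ
    (LinearEquiv.ofBijective ((ModuleCat.restrictScalars f.toRingHom).mapExtLinearMap k M N n)
      (mapExtAddHom_restrictScalars_bijective hf hidem M N n)).symm ≪≫ₗ
    (derivedExtLinearEquiv k M N n).symm).toModuleIso⟩

end IdempotentKernel

section Opposite

variable {k A B : Type*} [CommSemiring k] [Ring A] [Ring B] [Algebra k A] [Algebra k B]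

lemma projective_ker_op {f : A →+* B} {K : Submodule Aᵐᵒᵖ A}
    (hK : (K : Set A) = RingHom.ker f) [Module.Projective Aᵐᵒᵖ K] :
    Module.Projective Aᵐᵒᵖ (RingHom.ker (RingHom.op f)) := by
  have mem_iff (a : A) : a ∈ K ↔ MulOpposite.op a ∈ RingHom.ker (RingHom.op f) :=
    (Set.ext_iff.1 hK a).trans MulOpposite.op_injective.eq_iff.symm
  exact .of_equiv' (M := K)
    { toFun a := ⟨.op a, (mem_iff a).1 a.2⟩
      invFun a := ⟨a.1.unop, (mem_iff _).2 a.2⟩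
      map_add' _ _ := rfl
      map_smul' _ _ := rfl }

lemma isIdempotentElem_ker_op {f : A →ₐ[k] B}
    (hf : Submodule.span k {y : A | ∃ a ∈ RingHom.ker f, ∃ b ∈ RingHom.ker f, y = a * b} =
      Submodule.restrictScalars k (RingHom.ker f)) :
    IsIdempotentElem (RingHom.ker (RingHom.op f.toRingHom)) := by
  set J := RingHom.ker (RingHom.op f.toRingHom)
  have span_le : Submodule.span k {y : A | ∃ a ∈ RingHom.ker f, ∃ b ∈ RingHom.ker f, y = a * b} ≤
      ((J * J).restrictScalars k).comap (MulOpposite.opLinearEquiv k).toLinearMap := by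
    rw [Submodule.span_le]
    rintro _ ⟨a, ha, b, hb, rfl⟩
    exact Ideal.mul_mem_mul (congrArg MulOpposite.op hb) (congrArg MulOpposite.op ha)
  exact le_antisymm Ideal.mul_le_right fun x hx ↦ span_le (hf ▸ congrArg MulOpposite.unop hx)

end Opposite

open scoped ModuleCat.Algebra in
theorem stmt4_general {k : Type w} [CommRing k] {A B : Type u} [Ring A] [Ring B]
    [Algebra k A] [Algebra k B]
    (π : A →ₐ[k] B) (hsurj : Function.Surjective π)
    (hidem : Submodule.span k {y : A | ∃ a ∈ RingHom.ker π, ∃ b ∈ RingHom.ker π, y = a * b}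
      = Submodule.restrictScalars k (RingHom.ker π))
    (K : Submodule Aᵐᵒᵖ A) (hK : (K : Set A) = (RingHom.ker π : Set A))
    (hproj : Module.Projective Aᵐᵒᵖ K)
    (M N : ModuleCat.{max u v} Bᵐᵒᵖ) (n : ℕ) :
    Nonempty
      ((((Ext k (ModuleCat Aᵐᵒᵖ) n).obj
            (Opposite.op ((ModuleCat.restrictScalars (RingHom.op π.toRingHom)).obj M))).obj
          ((ModuleCat.restrictScalars (RingHom.op π.toRingHom)).obj N)) ≅
        (((Ext k (ModuleCat Bᵐᵒᵖ) n).obj (Opposite.op M)).obj N)) := by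
  have : Module.Projective Aᵐᵒᵖ (RingHom.ker (AlgHom.op π).toRingHom) := projective_ker_op hK
  exact nonempty_ext_restrictScalars_iso (f := AlgHom.op π) k
    (MulOpposite.op_surjective.comp (hsurj.comp MulOpposite.unop_surjective))
    (isIdempotentElem_ker_op hidem) M N n

/-- if `I` is an idempotent two-sided ideal of a `k`-algebra `A` (the kernel
of a surjective `k`-algebra map `π : A → B`, so `B ≅ A/I`) which is projective as a right
`A`-module (`K` is `I` viewed as a right `A`-submodule of `A`), then for right
`A/I`-modules `M, N` with `M` finitely generated and every `n ≥ 0`,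
`Ext^n_A(M, N) ≅ Ext^n_{A/I}(M, N)`. -/
theorem stmt4 (k : Type) [Field k] (A B : Type) [Ring A] [Ring B]
    [Algebra k A] [Algebra k B]
    (π : A →ₐ[k] B) (hsurj : Function.Surjective π)
    (hidem : Submodule.span k {y : A | ∃ a ∈ RingHom.ker π, ∃ b ∈ RingHom.ker π, y = a * b}
      = Submodule.restrictScalars k (RingHom.ker π))
    (K : Submodule Aᵐᵒᵖ A) (hK : (K : Set A) = (RingHom.ker π : Set A))
    (hproj : Module.Projective Aᵐᵒᵖ K)
    (M N : ModuleCat Bᵐᵒᵖ) (hM : Module.Finite Bᵐᵒᵖ M) (n : ℕ) :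
    Nonempty
      ((((Ext k (ModuleCat Aᵐᵒᵖ) n).obj
            (Opposite.op ((ModuleCat.restrictScalars (RingHom.op π.toRingHom)).obj M))).obj
          ((ModuleCat.restrictScalars (RingHom.op π.toRingHom)).obj N)) ≅
        (((Ext k (ModuleCat Bᵐᵒᵖ) n).obj (Opposite.op M)).obj N)) :=
  stmt4_general π hsurj hidem K hK hproj M N n
end

section
/- Let S be a finite regular monoid, k a field, and I ⊆ S a two-sided semigroup ideal of S. Then the k-linear span kI of I inside the monoid algebra kS is a two-sided ideal of kS, and for all finitely generated right kS/kI-modules M and N and all n ≥ 0 there is an isomorphism Ext^n_{kS}(M, N) ≅ Ext^n_{kS/kI}(M, N), where M and N are regarded as kS-modules via the projection kS → kS/kI. -/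
open CategoryTheory

/-!
Filter `kI` by the spans of an increasing chain of ideals of `S`, so that each layer is spanned by
a regular `𝒥`-class, say that of an idempotent `e`. If `J' ⊆ J` are consecutive terms of this
filtration of `A = kS`, then, as a left module, `J / J'` is a direct sum of copies of `(A / J') e`,
because every element of the `𝒥`-class of `e` factors uniquely as `l r` with `l` in the `ℒ`-class
of `e` and `r` in a transversal of the `ℒ`-classes of its `ℛ`-class. Hence, for a projective
resolution `P` of a right module `M` killed by `kI`, exactness of `P / P J'` in positive degrees
passes to `P / P J`: modulo `J'`, a cycle lying in `P J` is a sum of translates `y r` of cycles `y`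
in `P e`, and when `y` is the boundary of `x`, its translate `y r` is the boundary of `x r`, which
lies in `P J`. So `P / P kI` is a projective resolution of `M` over `kS / kI`, and for every
`kS / kI`-module `N` the complexes `Hom(P, N)` and `Hom(P / P kI, N)` agree.
-/

universe u v

section Adjunction

variable {C D : Type*} [Category.{v} C] [Category.{v} D] {L : C ⥤ D} {G : D ⥤ C} (adj : L ⊣ G)

theorem epi_adjunction_symm {M : D} [IsIso (adj.counit.app M)] {Y : C} (g : Y ⟶ G.obj M) [Epi g] :
    Epi ((adj.homEquiv Y M).symm g) := by
  have := adj.isLeftAdjoint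
  rw [adj.homEquiv_counit]
  exact epi_comp _ _

variable [Preadditive C] [Preadditive D] [L.Additive]

theorem map_comp_adjunction_symm_eq_zero {M : D} {X Y : C} {f : X ⟶ Y}
    {g : Y ⟶ G.obj M} (w : f ≫ g = 0) : L.map f ≫ (adj.homEquiv Y M).symm g = 0 := by
  rw [← adj.homEquiv_naturality_left_symm, w, adj.homEquiv_counit, L.map_zero, Limits.zero_comp]

/-- The bijection `Hom(L X, Y) ≃ Hom(X, G Y)` of a `k`-linear adjunction is `k`-linear. -/
def adjunctionHomLinearEquiv {k : Type*} [CommRing k] [Linear k C] [Linear k D] [G.Linear k]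
    (X : C) (Y : D) :
    (L.obj X ⟶ Y) ≃ₗ[k] (X ⟶ G.obj Y) where
  __ := adj.homAddEquiv X Y
  map_smul' c f := by simp [adj.homEquiv_unit]

end Adjunction

section AdjunctionExt

variable {C D : Type*} [Category.{v} C] [Category.{v} D] [Abelian C] [Abelian D]

/-- The projective resolution given by a complex `K` of projectives, exact in positive degrees, and
an augmentation `ε`. -/
noncomputable def projectiveResolutionOfExact {Z : C} (K : ChainComplex C ℕ)
    (hproj : ∀ n, Projective (K.X n)) (hK : ∀ n, K.ExactAt (n + 1)) (ε : K.X 0 ⟶ Z)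
    (hε : Epi ε) (w : K.d 1 0 ≫ ε = 0) (hex : (ShortComplex.mk _ _ w).Exact) :
    ProjectiveResolution Z where
  complex := K
  projective := hproj
  π := (ChainComplex.toSingle₀Equiv _ _).symm ⟨ε, w⟩
  quasiIso := ⟨fun n ↦ by
    cases n with
    | zero =>
      rw [ChainComplex.quasiIsoAt₀_iff, ShortComplex.quasiIso_iff_of_zeros' _ _ rfl rfl]
      · refine (ShortComplex.exact_and_epi_g_iff_of_iso ?_).2 ⟨hex, hε⟩
        exact ShortComplex.isoMk (Iso.refl _) (Iso.refl _) (Iso.refl _)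
          ((Category.id_comp _).trans (Category.comp_id _).symm)
          ((Category.id_comp _).trans
            ((ChainComplex.toSingle₀Equiv_symm_apply_f_zero ε w).symm.trans
              (Category.comp_id _).symm))
      · exact K.shape 0 0 (by simp)
    | succ n =>
      rw [quasiIsoAt_iff_exactAt' _ _ (ChainComplex.exactAt_succ_single_obj _ _)]
      exact hK n⟩

/-- The augmentation `P₀ ⟶ Z` of a projective resolution of `Z`, with target `Z` itself instead of
the degree `0` term of the complex concentrated at `Z`. -/
def augmentation {Z : C} (P : ProjectiveResolution Z) : P.complex.X 0 ⟶ Z :=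
  P.π.f 0

theorem d_comp_augmentation {Z : C} (P : ProjectiveResolution Z) :
    P.complex.d 1 0 ≫ augmentation P = 0 :=
  P.complex_d_comp_π_f_zero

theorem augmentation_exact {Z : C} (P : ProjectiveResolution Z) :
    (ShortComplex.mk _ _ (d_comp_augmentation P)).Exact :=
  P.exact₀

instance {Z : C} (P : ProjectiveResolution Z) : Epi (augmentation P) :=
  inferInstanceAs (Epi (P.π.f 0))

variable {L : C ⥤ D} {G : D ⥤ C} (adj : L ⊣ G)

theorem exact_adjunction_symm [L.Additive] {M : D} [IsIso (adj.counit.app M)] {X Y : C}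
    {f : X ⟶ Y} {g : Y ⟶ G.obj M} [Epi g] {w : f ≫ g = 0} (h : (ShortComplex.mk f g w).Exact) :
    (ShortComplex.mk _ _ (map_comp_adjunction_symm_eq_zero adj w)).Exact := by
  have := adj.isLeftAdjoint
  let counitIso : L.obj (G.obj M) ≅ M := asIso (adj.counit.app M)
  refine (ShortComplex.exact_iff_of_iso ?_).1
    (h.map_of_epi_of_preservesCokernel L inferInstance inferInstance)
  exact ShortComplex.isoMk (Iso.refl _) (Iso.refl _) counitIso
    ((Category.id_comp _).trans (Category.comp_id _).symm)
    ((Category.id_comp _).trans (adj.homEquiv_counit _ _ _))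

/-- The image of a projective resolution of `G M` under a left adjoint `L` of `G` such that
`L G M ≅ M`, provided that it stays exact in positive degrees. -/
noncomputable def adjointResolution [L.Additive] [G.PreservesEpimorphisms] {M : D}
    [IsIso (adj.counit.app M)] (P : ProjectiveResolution (G.obj M))
    (hP : ∀ n, ((L.mapHomologicalComplex _).obj P.complex).ExactAt (n + 1)) :
    ProjectiveResolution M :=
  projectiveResolutionOfExact ((L.mapHomologicalComplex _).obj P.complex)
    (fun n ↦ adj.map_projective _ (P.projective n)) hP
    ((adj.homEquiv _ M).symm (augmentation P)) (epi_adjunction_symm adj _)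
    _ (exact_adjunction_symm adj (augmentation_exact P))

section Linear

variable {k : Type*} [CommRing k] [Linear k C] [Linear k D]

/-- `Hom(L K, Y) ≅ Hom(K, G Y)` for a chain complex `K`. -/
def linearYonedaObjAdjunctionIso [L.Additive] [G.Linear k] (K : ChainComplex C ℕ)
    (Y : D) :
    K.linearYonedaObj k (G.obj Y) ≅
      ChainComplex.linearYonedaObj ((L.mapHomologicalComplex _).obj K) k Y :=
  HomologicalComplex.Hom.isoOfComponents
    (fun n ↦ (adjunctionHomLinearEquiv adj (K.X n) Y).symm.toModuleIso)
    fun i j _ ↦ by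
      ext f
      exact (adj.homEquiv_naturality_left_symm (K.d j i) f).symm

/-- A left adjoint which preserves a projective resolution preserves `Ext`. -/
noncomputable def extAdjunctionIso [EnoughProjectives C] [EnoughProjectives D] [L.Additive]
    [G.Linear k] [G.PreservesEpimorphisms] {M : D} [IsIso (adj.counit.app M)]
    (P : ProjectiveResolution (G.obj M))
    (hP : ∀ n, ((L.mapHomologicalComplex _).obj P.complex).ExactAt (n + 1)) (n : ℕ) (N : D) :
    ((Ext k C n).obj (.op (G.obj M))).obj (G.obj N) ≅ ((Ext k D n).obj (.op M)).obj N :=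
  P.isoExt n _ ≪≫
    (HomologicalComplex.homologyFunctor _ _ n).mapIso
      (linearYonedaObjAdjunctionIso adj P.complex N) ≪≫
    ((adjointResolution adj P hP).isoExt (R := k) n N).symm

end Linear

end AdjunctionExt

section ModuloIdeal

variable {R : Type*} [Ring R] {J J' : Ideal R} {e : R} {ι : Type*} [Fintype ι] {r : ι → R}
  {W X Y Z : Type*} [AddCommGroup W] [Module R W] [AddCommGroup X] [Module R X]
  [AddCommGroup Y] [Module R Y] [AddCommGroup Z] [Module R Z]

/-- `X → Y → Z` becomes exact at `Y / JY` after reducing the three modules modulo `J`. It is meant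
for linear maps with `g ∘ f = 0`, so only one inclusion is recorded. -/
def ExactModulo (J : Ideal R) (f : X →ₗ[R] Y) (g : Y →ₗ[R] Z) : Prop :=
  (J • ⊤ : Submodule R Z).comap g ≤ J • ⊤ ⊔ LinearMap.range f

/-- The translates by the `r i` of the image of `e • Z` in `Z / JZ` are independent, and translation
by each `r i` is injective on that image. -/
def IndependentModulo (J : Ideal R) (e : R) (r : ι → R) (Z : Type*) [AddCommGroup Z] [Module R Z] :
    Prop :=
  ∀ z : ι → Z, ∑ i, r i • e • z i ∈ (J • ⊤ : Submodule R Z) →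
    ∀ i, e • z i ∈ (J • ⊤ : Submodule R Z)

/-- The layer `J / J'` of a filtration of `R` by ideals is, as a right `R`-module, the direct sum of
the copies `r i • e (R / J')` of `e (R / J')`. Over `R = (kS)ᵐᵒᵖ` both products are those of `kS` in
reverse order. -/
structure IsFreeStratum (J' J : Ideal R) (e : R) (r : ι → R) : Prop where
  le : J' ≤ J
  mem : e ∈ J
  translate_mem : ∀ i, r i ∈ J
  generates : ∀ x ∈ J, ∃ a : ι → R, x - ∑ i, r i * (e * a i) ∈ J'
  independent : IndependentModulo J' e r R

theorem IsFreeStratum.generates_smul_top (h : IsFreeStratum J' J e r) {z : Z}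
    (hz : z ∈ (J • ⊤ : Submodule R Z)) :
    ∃ y : ι → Z, z - ∑ i, r i • e • y i ∈ (J' • ⊤ : Submodule R Z) := by
  refine Submodule.smul_induction_on hz (fun x hx z _ ↦ ?_) fun z₁ z₂ h₁ h₂ ↦ ?_
  · obtain ⟨a, ha⟩ := h.generates x hx
    refine ⟨fun i ↦ a i • z, ?_⟩
    simpa only [sub_smul, Finset.sum_smul, mul_smul] using
      Submodule.smul_mem_smul ha (Submodule.mem_top (x := z))
  · obtain ⟨y₁, hy₁⟩ := h₁
    obtain ⟨y₂, hy₂⟩ := h₂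
    refine ⟨y₁ + y₂, ?_⟩
    simpa only [Pi.add_apply, smul_add, Finset.sum_add_distrib, add_sub_add_comm] using
      add_mem hy₁ hy₂

theorem map_mem_ideal_smul_top (f : Y →ₗ[R] Z) {y : Y} (hy : y ∈ (J • ⊤ : Submodule R Y)) :
    f y ∈ (J • ⊤ : Submodule R Z) :=
  Submodule.smul_top_le_comap_smul_top J f hy

theorem finsupp_mem_ideal_smul_top {α : Type*} {v : α →₀ R}
    (hv : ∀ a, v a ∈ (J • ⊤ : Submodule R R)) : v ∈ (J • ⊤ : Submodule R (α →₀ R)) := by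
  rw [← Finsupp.sum_single v]
  exact Submodule.sum_mem _ fun a _ ↦ map_mem_ideal_smul_top (Finsupp.lsingle a) (hv a)

theorem IndependentModulo.of_projective [Module.Projective R Z] (h : IndependentModulo J e r R) :
    IndependentModulo J e r Z := by
  obtain ⟨s, hs⟩ := Module.projective_def'.1 (inferInstance : Module.Projective R Z)
  intro z hz i
  have coord_mem (p : Z) : s (e • z i) p ∈ (J • ⊤ : Submodule R R) := by
    have hsum := map_mem_ideal_smul_top (Finsupp.lapply p ∘ₗ s) hz
    simp only [map_sum, map_smul] at hsum
    simpa using h _ hsum i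
  have := map_mem_ideal_smul_top (Finsupp.linearCombination R id)
    (finsupp_mem_ideal_smul_top coord_mem)
  rwa [← LinearMap.comp_apply, hs] at this

theorem IndependentModulo.of_smul_eq_zero (he : ∀ z : Z, e • z = 0) : IndependentModulo J e r Z :=
  fun z _ i ↦ by simp only [he, zero_mem]

theorem IsFreeStratum.inf_comap_le (h : IsFreeStratum J' J e r) {f : Y →ₗ[R] Z} {g : Z →ₗ[R] W}
    (hW : IndependentModulo J' e r W) (hfg : ExactModulo J' f g) :
    (J • ⊤ : Submodule R Z) ⊓ (J' • ⊤ : Submodule R W).comap g ≤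
      J' • ⊤ ⊔ (J • ⊤ : Submodule R Y).map f := by
  rintro z ⟨hzJ, hgz⟩
  obtain ⟨y, hy⟩ := h.generates_smul_top hzJ
  have hg_sum : ∑ i, r i • e • g (y i) ∈ (J' • ⊤ : Submodule R W) := by
    have := sub_mem (Submodule.mem_comap.1 hgz) (map_mem_ideal_smul_top g hy)
    simpa only [map_sub, map_sum, map_smul, sub_sub_cancel] using this
  have hg_mem (i : ι) : e • y i ∈ (J' • ⊤ : Submodule R Z) ⊔ LinearMap.range f := hfg <| by
    simpa only [Submodule.mem_comap, map_smul] using hW _ hg_sum i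
  have translate_mem (i : ι) :
      r i • e • y i ∈ (J' • ⊤ : Submodule R Z) ⊔ (J • ⊤ : Submodule R Y).map f := by
    obtain ⟨z', hz', _, ⟨w, rfl⟩, hw⟩ := Submodule.mem_sup.1 (hg_mem i)
    rw [← hw, smul_add, ← map_smul]
    exact Submodule.add_mem_sup (Submodule.smul_mem _ _ hz') <|
      Submodule.mem_map_of_mem (Submodule.smul_mem_smul (h.translate_mem i) Submodule.mem_top)
  rw [← sub_add_cancel z (∑ i, r i • e • y i)]
  exact add_mem (Submodule.mem_sup_left hy) (sum_mem fun i _ ↦ translate_mem i)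

theorem IsFreeStratum.exactModulo (h : IsFreeStratum J' J e r) {f : X →ₗ[R] Y} {g : Y →ₗ[R] Z}
    {p : Z →ₗ[R] W} (hW : IndependentModulo J' e r W) (hpg : p ∘ₗ g = 0)
    (hfg : ExactModulo J' f g) (hgp : ExactModulo J' g p) : ExactModulo J f g := by
  intro y hy
  have hpgy : p (g y) ∈ (J' • ⊤ : Submodule R W) := by
    rw [← LinearMap.comp_apply, hpg]
    exact zero_mem _
  obtain ⟨z, hz, _, ⟨y', hy', rfl⟩, hzy⟩ := Submodule.mem_sup.1 (h.inf_comap_le hW hgp ⟨hy, hpgy⟩)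
  have hdiff : y - y' ∈ (J' • ⊤ : Submodule R Y) ⊔ LinearMap.range f := hfg <| by
    simpa only [Submodule.mem_comap, map_sub, ← hzy, add_sub_cancel_right] using hz
  have hJ'J : (J' • ⊤ : Submodule R Y) ⊔ LinearMap.range f ≤ J • ⊤ ⊔ LinearMap.range f :=
    sup_le_sup_right (Submodule.smul_mono_left h.le) _
  rw [← sub_add_cancel y y']
  exact add_mem (hJ'J hdiff) (Submodule.mem_sup_left hy')

theorem exactModulo_bot {f : X →ₗ[R] Y} {g : Y →ₗ[R] Z} (hfg : Function.Exact f g) :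
    ExactModulo ⊥ f g := by
  simp only [ExactModulo, Submodule.bot_smul, bot_sup_eq]
  exact (LinearMap.exact_iff.1 hfg).le

theorem exactModulo_of_smul_top_eq_bot {f : X →ₗ[R] Y} {g : Y →ₗ[R] Z}
    (hfg : Function.Exact f g) (hJ : (J • ⊤ : Submodule R Z) = ⊥) : ExactModulo J f g := by
  rw [ExactModulo, hJ]
  exact (LinearMap.exact_iff.1 hfg).le.trans le_sup_right

/-- `J` is the top of a finite filtration of ideals, starting at `0`, each of whose layers is a free
stratum. -/
inductive IsStratified {R : Type u} [Ring R] : Ideal R → Prop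
  | bot : IsStratified ⊥
  | step {J' J : Ideal R} {e : R} {ι : Type u} [Fintype ι] {r : ι → R} :
      IsStratified J' → IsFreeStratum J' J e r → IsStratified J

theorem IsStratified.exactModulo_resolution {R : Type u} [Ring R] {J : Ideal R}
    (hJ : IsStratified J) {M : Type*} [AddCommGroup M] [Module R M]
    (hJM : (J • ⊤ : Submodule R M) = ⊥) {P : ℕ → Type*} [∀ n, AddCommGroup (P n)]
    [∀ n, Module R (P n)] [∀ n, Module.Projective R (P n)] {d : ∀ n, P (n + 1) →ₗ[R] P n}
    {ε : P 0 →ₗ[R] M} (hε : Function.Exact (d 0) ε) (hd : ∀ n, Function.Exact (d (n + 1)) (d n))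
    (n : ℕ) : ExactModulo J (d (n + 1)) (d n) := by
  induction hJ generalizing n with
  | bot => exact exactModulo_bot (hd n)
  | @step J' J e _ _ _ _ h ih =>
    have hJ'M : (J' • ⊤ : Submodule R M) = ⊥ :=
      le_bot_iff.1 (hJM ▸ Submodule.smul_mono_left h.le)
    cases n with
    | zero =>
      have heM (m : M) : e • m = 0 := (Submodule.mem_bot R).1 <|
        hJM ▸ Submodule.smul_mem_smul h.mem Submodule.mem_top
      exact h.exactModulo (.of_smul_eq_zero heM) hε.linearMap_comp_eq_zero (ih hJ'M 0)
        (exactModulo_of_smul_top_eq_bot hε hJ'M)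
    | succ n =>
      exact h.exactModulo h.independent.of_projective (hd n).linearMap_comp_eq_zero
        (ih hJ'M (n + 1)) (ih hJ'M n)

end ModuloIdeal

section Reduction

variable {R B : Type*} [Ring R] [Ring B] (φ : R →+* B)
  (P N : Type*) [AddCommGroup P] [Module R P] [AddCommGroup N] [Module B N]

/-- The reduction `P / (ker φ) P` of an `R`-module along a surjection `φ : R → B`, viewed as a
`B`-module. -/
def Reduction : Type _ :=
  P ⧸ (RingHom.ker φ • ⊤ : Submodule R P)

namespace Reduction

instance : AddCommGroup (Reduction φ P) :=
  inferInstanceAs (AddCommGroup (P ⧸ (RingHom.ker φ • ⊤ : Submodule R P)))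

variable {φ P N} in
theorem ideal_smul_top_le_ker (f : P →ₛₗ[φ] N) : RingHom.ker φ • ⊤ ≤ LinearMap.ker f :=
  Submodule.smul_le.2 fun a ha x _ ↦ by
    rw [LinearMap.mem_ker, map_smulₛₗ, (RingHom.mem_ker).1 ha, zero_smul]

variable [RingHomSurjective φ]

noncomputable instance : Module B (Reduction φ P) :=
  Module.compHom (P ⧸ (RingHom.ker φ • ⊤ : Submodule R P))
    (RingHom.quotientKerEquivOfSurjective φ.surjective).symm.toRingHom

/-- The projection of `P` onto its reduction. -/
noncomputable def mk : P →ₛₗ[φ] Reduction φ P where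
  __ := (Submodule.mkQ (RingHom.ker φ • ⊤ : Submodule R P)).toAddMonoidHom
  map_smul' a x := by
    change _ = (RingHom.quotientKerEquivOfSurjective φ.surjective).symm (φ a) •
      Submodule.mkQ (RingHom.ker φ • ⊤ : Submodule R P) x
    rw [RingHom.quotientKerEquivOfSurjective_symm_apply]
    rfl

theorem mk_surjective : Function.Surjective (mk φ P) :=
  Submodule.mkQ_surjective _

variable {P} in
theorem mk_eq_zero_iff {x : P} : mk φ P x = 0 ↔ x ∈ (RingHom.ker φ • ⊤ : Submodule R P) :=
  Submodule.Quotient.mk_eq_zero _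

/-- The universal property of the reduction. -/
noncomputable def homEquiv : (Reduction φ P →ₗ[B] N) ≃ (P →ₛₗ[φ] N) where
  toFun g := g.comp (mk φ P)
  invFun f :=
    { toFun := Submodule.liftQ _ f (ideal_smul_top_le_ker f)
      map_add' := map_add _
      map_smul' := by
        intro b x
        obtain ⟨a, rfl⟩ := φ.surjective b
        obtain ⟨x, rfl⟩ := mk_surjective φ P x
        rw [← map_smulₛₗ]
        exact map_smulₛₗ f a x }
  left_inv g := LinearMap.ext fun x ↦ by
    obtain ⟨x, rfl⟩ := mk_surjective φ P x
    rfl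
  right_inv f := rfl

end Reduction

end Reduction

section ModuleCat

variable {R B : Type*} [Ring R] [Ring B] (φ : R →+* B) [RingHomSurjective φ]

instance : (ModuleCat.restrictScalars φ).PreservesEpimorphisms where
  preserves f hf := (ModuleCat.epi_iff_surjective _).2 ((ModuleCat.epi_iff_surjective f).1 hf)

instance : (ModuleCat.restrictScalars φ).Full where
  map_surjective {X Y} f :=
    ⟨ModuleCat.ofHom
      { toFun := f.hom
        map_add' := map_add f.hom
        map_smul' := fun b x ↦ by
          obtain ⟨a, rfl⟩ := φ.surjective b
          exact f.hom.map_smul a x }, rfl⟩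

/-- Morphisms `P / (ker φ) P ⟶ N` of `B`-modules are morphisms from `P` to the restriction of
`N`. -/
noncomputable def reductionHomEquiv (P : ModuleCat.{u} R) (N : ModuleCat.{u} B) :
    (ModuleCat.of B (Reduction φ P) ⟶ N) ≃ (P ⟶ (ModuleCat.restrictScalars φ).obj N) :=
  ModuleCat.homEquiv.trans <| (Reduction.homEquiv φ P N).trans
    { toFun f := ModuleCat.ofHom (Y := (ModuleCat.restrictScalars φ).obj N)
        { toFun := f, map_add' := map_add f, map_smul' := map_smulₛₗ f }
      invFun f := { toFun := f.hom, map_add' := map_add f.hom, map_smul' := map_smul f.hom }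
      left_inv _ := rfl
      right_inv _ := rfl }

/-- The functor `P ↦ P / (ker φ) P`. -/
noncomputable def reductionFunctor : ModuleCat.{u} R ⥤ ModuleCat.{u} B :=
  Adjunction.leftAdjointOfEquiv (G := ModuleCat.restrictScalars φ) (reductionHomEquiv φ)
    fun _ _ _ _ _ ↦ rfl

/-- Reduction modulo `ker φ` is left adjoint to restriction of scalars along `φ`. -/
noncomputable def reductionAdjunction :
    reductionFunctor φ ⊣ ModuleCat.restrictScalars.{u} φ :=
  Adjunction.adjunctionOfEquivLeft _ _

instance : (reductionFunctor.{u} φ).Additive :=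
  (reductionAdjunction φ).left_adjoint_additive

theorem ExactModulo.exactAt_reduction {K : ChainComplex (ModuleCat.{u} R) ℕ} {n : ℕ}
    (h : ExactModulo (RingHom.ker φ) (K.d (n + 2) (n + 1)).hom (K.d (n + 1) n).hom) :
    (((reductionFunctor φ).mapHomologicalComplex _).obj K).ExactAt (n + 1) := by
  rw [HomologicalComplex.exactAt_iff' _ (n + 2) (n + 1) n (by simp) (by simp),
    ShortComplex.moduleCat_exact_iff]
  intro x hx
  obtain ⟨x, rfl⟩ := Reduction.mk_surjective φ (K.X (n + 1)) x
  obtain ⟨y, hy, _, ⟨w, rfl⟩, rfl⟩ := Submodule.mem_sup.1 (h ((Reduction.mk_eq_zero_iff φ).1 hx))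
  refine ⟨Reduction.mk φ (K.X (n + 2)) w, ?_⟩
  rw [map_add, (Reduction.mk_eq_zero_iff φ).2 hy, zero_add]
  rfl

theorem IsStratified.exactModulo_projectiveResolution {R : Type u} [Ring R] {J : Ideal R}
    (hJ : IsStratified J) {M : ModuleCat.{u} R} (hJM : (J • ⊤ : Submodule R M) = ⊥)
    (P : ProjectiveResolution M) (n : ℕ) :
    ExactModulo J (P.complex.d (n + 2) (n + 1)).hom (P.complex.d (n + 1) n).hom :=
  have (n : ℕ) : Module.Projective R (P.complex.X n) :=
    (IsProjective.iff_projective _).2 (P.projective n)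
  hJ.exactModulo_resolution (P := fun n ↦ P.complex.X n)
    (d := fun n ↦ (P.complex.d (n + 1) n).hom) hJM
    ((ShortComplex.ShortExact.moduleCat_exact_iff_function_exact _).1 (augmentation_exact P))
    (fun n ↦ (ShortComplex.ShortExact.moduleCat_exact_iff_function_exact _).1 (P.exact_succ n)) n

theorem ker_smul_top_restrictScalars {R B : Type*} [Ring R] [Ring B] (φ : R →+* B)
    (M : ModuleCat.{u} B) :
    (RingHom.ker φ • ⊤ : Submodule R ((ModuleCat.restrictScalars φ).obj M)) = ⊥ :=
  le_bot_iff.1 <| Submodule.smul_le.2 fun a ha x _ ↦ by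
    change φ a • (show M from x) = 0
    rw [RingHom.mem_ker.1 ha, zero_smul]

open scoped ModuleCat.Algebra in
/-- Restriction of scalars along a surjection of algebras with stratified kernel preserves
`Ext`. -/
noncomputable def IsStratified.extIso {k : Type*} [CommRing k] {R B : Type u} [Ring R]
    [Ring B] [Algebra k R] [Algebra k B] {φ : R →ₐ[k] B} (hφ : Function.Surjective φ)
    (h : IsStratified (RingHom.ker φ.toRingHom)) (M N : ModuleCat.{u} B) (n : ℕ) :
    ((Ext k (ModuleCat.{u} R) n).obj
      (.op ((ModuleCat.restrictScalars φ.toRingHom).obj M))).obj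
        ((ModuleCat.restrictScalars φ.toRingHom).obj N) ≅
      ((Ext k (ModuleCat.{u} B) n).obj (.op M)).obj N :=
  have : RingHomSurjective φ.toRingHom := ⟨hφ⟩
  extAdjunctionIso (reductionAdjunction φ.toRingHom)
    (projectiveResolution ((ModuleCat.restrictScalars φ.toRingHom).obj M))
    (fun _ ↦ (h.exactModulo_projectiveResolution
      (ker_smul_top_restrictScalars _ M) _ _).exactAt_reduction φ.toRingHom) n N

end ModuleCat

section GreenRelations

variable {S : Type*} [Monoid S] {I I' : Set S} {e l r s t u : S}

/-- A two-sided ideal of the monoid `S`; unlike in the usual convention, `∅` is allowed, so that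
filtrations by ideals can start there. -/
def IsSemigroupIdeal (I : Set S) : Prop :=
  ∀ a ∈ I, ∀ s : S, a * s ∈ I ∧ s * a ∈ I

/-- The preorder underlying Green's relation `𝒥`: `s` lies in the two-sided ideal generated by
`t`. -/
def JLE (s t : S) : Prop :=
  ∃ a b, s = a * t * b

theorem JLE.refl (s : S) : JLE s s :=
  ⟨1, 1, by rw [one_mul, mul_one]⟩

theorem JLE.trans (hst : JLE s t) (htu : JLE t u) : JLE s u := by
  obtain ⟨a, b, rfl⟩ := hst
  obtain ⟨c, d, rfl⟩ := htu
  exact ⟨a * c, d * b, by simp only [mul_assoc]⟩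

theorem JLE.mul_left (a s : S) : JLE (a * s) s :=
  ⟨a, 1, (mul_one _).symm⟩

theorem JLE.mul_right (s b : S) : JLE (s * b) s :=
  ⟨1, b, by rw [one_mul]⟩

theorem IsSemigroupIdeal.mem_of_jle (hI : IsSemigroupIdeal I) (hs : s ∈ I) (hts : JLE t s) :
    t ∈ I := by
  obtain ⟨a, b, rfl⟩ := hts
  exact (hI _ (hI s hs a).2 b).1

theorem IsSemigroupIdeal.sep_not_jle (hI : IsSemigroupIdeal I) (e : S) :
    IsSemigroupIdeal {s ∈ I | ¬ JLE e s} := fun s hs a ↦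
  ⟨⟨(hI s hs.1 a).1, fun h ↦ hs.2 (h.trans (.mul_right s a))⟩,
    ⟨(hI s hs.1 a).2, fun h ↦ hs.2 (h.trans (.mul_left a s))⟩⟩

/-- Finiteness enters by counting: `S l ⊆ S e = S x l z`, and the last set has at most as many
elements as `S l`. -/
theorem exists_mul_eq_of_jle [Finite S] (hl : l * e = l) (h : JLE e l) : ∃ y, y * l = e := by
  obtain ⟨x, z, hxz⟩ := h
  have hsub : Set.range (· * l) ⊆ Set.range (· * e) := by
    rintro _ ⟨a, rfl⟩
    exact ⟨a * l, by simp only [mul_assoc, hl]⟩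
  have hsub' : Set.range (· * e) ⊆ (· * z) '' Set.range (· * l) := by
    rintro _ ⟨a, rfl⟩
    exact ⟨a * x * l, ⟨a * x, rfl⟩, by simp only [hxz, mul_assoc]⟩
  have hcard : (Set.range (· * e)).ncard ≤ (Set.range (· * l)).ncard :=
    (Set.ncard_le_ncard hsub').trans Set.ncard_image_le
  have heq : Set.range (· * l) = Set.range (· * e) := Set.eq_of_subset_of_ncard_le hsub hcard
  exact heq.ge ⟨1, one_mul e⟩

theorem exists_eq_mul_of_jle [Finite S] (hr : e * r = r) (h : JLE e r) : ∃ z, r * z = e := by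
  obtain ⟨x, z, hxz⟩ := h
  have : Finite Sᵐᵒᵖ := .of_equiv S MulOpposite.opEquiv
  obtain ⟨y, hy⟩ := exists_mul_eq_of_jle (S := Sᵐᵒᵖ) (congrArg MulOpposite.op hr)
    ⟨.op z, .op x, (congrArg MulOpposite.op hxz).trans <| by
      rw [MulOpposite.op_mul, MulOpposite.op_mul, mul_assoc]⟩
  exact ⟨y.unop, congrArg MulOpposite.unop hy⟩

theorem exists_isIdempotentElem_maximal [Finite S] (hreg : ∀ s ∈ I, ∃ t : S, s * t * s = s)
    (hI : IsSemigroupIdeal I) (hne : I.Nonempty) :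
    ∃ e ∈ I, IsIdempotentElem e ∧ ∀ u ∈ I, JLE e u → JLE u e := by
  obtain ⟨s, hs, hmax⟩ := (Set.toFinite I).exists_maximalFor (fun s ↦ {u | JLE u s}) I hne
  obtain ⟨t, hst⟩ := hreg s hs
  have hse : JLE s (t * s) := ⟨s, 1, by rw [mul_one, ← mul_assoc, hst]⟩
  refine ⟨t * s, (hI s hs t).2, ?_, fun u hu h ↦ ?_⟩
  · rw [IsIdempotentElem, mul_assoc, ← mul_assoc s, hst]
  · exact (hmax hu (fun v hv ↦ JLE.trans hv (hse.trans h)) (JLE.refl u)).trans hse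

/-- `T` is a transversal of the `ℒ`-classes in the `ℛ`-class of `e`, recorded through the unique
factorization of each element of the `𝒥`-class of `e` as `l * r` with `l` in the `ℒ`-class of `e`
and `r ∈ T`. In a finite monoid `{l | l * e = l ∧ JLE e l}` is that `ℒ`-class. -/
structure IsTransversal (e : S) (T : Set S) : Prop where
  mul_eq : ∀ r ∈ T, e * r = r
  bijOn : Set.BijOn (fun p : S × S ↦ p.1 * p.2) ({l | l * e = l ∧ JLE e l} ×ˢ T)
    {u | JLE e u ∧ JLE u e}

theorem IsTransversal.eq_of_mul_eq {T : Set S} (hT : IsTransversal e T) {d r' : S}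
    (hl : l * e = l) (hel : JLE e l) (hr : r ∈ T) (hr' : r' ∈ T) (he : IsIdempotentElem e)
    (hd : d * r' = l * r) : d * e = l ∧ r' = r := by
  have hder' : d * e * r' = l * r := by rw [mul_assoc, hT.mul_eq r' hr', hd]
  have helr : JLE e (d * e * r') := hder' ▸ (hT.bijOn.mapsTo (x := (l, r)) ⟨⟨hl, hel⟩, hr⟩).1
  have hmem : (d * e, r') ∈ {l | l * e = l ∧ JLE e l} ×ˢ T :=
    ⟨⟨by rw [mul_assoc, he], helr.trans (.mul_right _ _)⟩, hr'⟩
  exact Prod.ext_iff.1 (hT.bijOn.injOn hmem (x₂ := (l, r)) ⟨⟨hl, hel⟩, hr⟩ hder')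

theorem JLE.mul [Finite S] (hel : JLE e l) (her : JLE e r) (he : IsIdempotentElem e)
    (hl : l * e = l) (hr : e * r = r) : JLE e (l * r) := by
  obtain ⟨y, hy⟩ := exists_mul_eq_of_jle hl hel
  obtain ⟨z, hz⟩ := exists_eq_mul_of_jle hr her
  exact ⟨y, z, by rw [← mul_assoc, hy, mul_assoc, hz, he]⟩

theorem range_mul_right_subset_of_mul_eq [Finite S] {l' r' : S} (hl : l * e = l)
    (hel : JLE e l) (hr : e * r = r) (h : l * r = l' * r') :
    Set.range (· * r) ⊆ Set.range (· * r') := by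
  obtain ⟨y, hy⟩ := exists_mul_eq_of_jle hl hel
  have hrr' : r = y * l' * r' := by rw [mul_assoc, ← h, ← mul_assoc, hy, hr]
  rintro _ ⟨a, rfl⟩
  exact ⟨a * (y * l'), (mul_assoc _ _ _).trans (congrArg (a * ·) hrr'.symm)⟩

theorem eq_of_mul_right_eq [Finite S] {l' : S} (hl : l * e = l) (hl' : l' * e = l')
    (hr : e * r = r) (her : JLE e r) (h : l * r = l' * r) : l = l' := by
  obtain ⟨z, hz⟩ := exists_eq_mul_of_jle hr her
  rw [← hl, ← hl', ← hz, ← mul_assoc, h, mul_assoc]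

theorem exists_isTransversal [Finite S] (he : IsIdempotentElem e) : ∃ T, IsTransversal e T := by
  obtain ⟨T, hT, hbij⟩ :=
    Set.exists_subset_bijOn {r | e * r = r ∧ JLE e r} fun r ↦ Set.range (· * r)
  refine ⟨T, fun r hr ↦ (hT hr).1, ?_, ?_, ?_⟩
  · rintro ⟨l, r⟩ ⟨⟨hl, hel⟩, hr⟩
    refine ⟨hel.mul (hT hr).2 he hl (hT hr).1, l, r, ?_⟩
    rw [hl]
  · rintro ⟨l, r⟩ ⟨⟨hl, hel⟩, hr⟩ ⟨l', r'⟩ ⟨⟨hl', hel'⟩, hr'⟩ h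
    have hrr' : r = r' := hbij.injOn hr hr' <| Set.Subset.antisymm
      (range_mul_right_subset_of_mul_eq hl hel (hT hr).1 h)
      (range_mul_right_subset_of_mul_eq hl' hel' (hT hr').1 h.symm)
    subst hrr'
    exact congrArg (·, r) (eq_of_mul_right_eq hl hl' (hT hr).1 (hT hr).2 h)
  · rintro _ ⟨heu, a, b, rfl⟩
    have heb : JLE e (e * b) := heu.trans ⟨a, 1, by rw [mul_one, mul_assoc]⟩
    obtain ⟨r, hr, hrange⟩ := hbij.surjOn ⟨e * b, ⟨by rw [← mul_assoc, he], heb⟩, rfl⟩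
    obtain ⟨x, hx⟩ : e * b ∈ Set.range (· * r) := hrange.ge ⟨1, one_mul _⟩
    have hlr : a * e * x * e * r = a * e * b := by
      simp only [mul_assoc, (hT hr).1, hx]
      rw [← mul_assoc e e, he]
    refine ⟨(a * e * x * e, r), ⟨⟨by rw [mul_assoc, he], ?_⟩, hr⟩, hlr⟩
    exact (hlr ▸ heu).trans (.mul_right _ r)

/-- `I'` and `I` are consecutive ideals of a filtration of `S`, and the layer `I \ I'` is the
`𝒥`-class of the idempotent `e`. -/
structure IsStratum (I' I : Set S) (e : S) : Prop where
  isSemigroupIdeal : IsSemigroupIdeal I'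
  subset : I' ⊆ I
  isIdempotentElem : IsIdempotentElem e
  diff_eq : I \ I' = {u | JLE e u ∧ JLE u e}

theorem exists_isStratum [Finite S] (hreg : ∀ s ∈ I, ∃ t : S, s * t * s = s)
    (hI : IsSemigroupIdeal I) (hne : I.Nonempty) : ∃ I' e, IsStratum I' I e := by
  obtain ⟨e, heI, he, hmax⟩ := exists_isIdempotentElem_maximal hreg hI hne
  refine ⟨{u ∈ I | ¬ JLE e u}, e, hI.sep_not_jle e, Set.sep_subset _ _, he,
    Set.Subset.antisymm ?_ ?_⟩
  · rintro u ⟨hu, hu'⟩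
    have heu : JLE e u := not_not.1 fun h ↦ hu' ⟨hu, h⟩
    exact ⟨heu, hmax u hu heu⟩
  · rintro u ⟨heu, hue⟩
    exact ⟨hI.mem_of_jle heI hue, fun h ↦ h.2 heu⟩

theorem IsStratum.mem (h : IsStratum I' I e) : e ∈ I :=
  (h.diff_eq.ge ⟨.refl e, .refl e⟩).1

theorem IsStratum.ssubset (h : IsStratum I' I e) : I' ⊂ I :=
  ⟨h.subset, fun hII' ↦ (h.diff_eq.ge ⟨.refl e, .refl e⟩).2 (hII' h.mem)⟩

theorem IsStratum.jle_of_notMem (h : IsStratum I' I e) (hI : IsSemigroupIdeal I) (hl : l * e = l)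
    (hl' : l ∉ I') : JLE e l :=
  (h.diff_eq.le ⟨hl ▸ (hI e h.mem l).2, hl'⟩).1

end GreenRelations

section MonoidAlgebra

variable {k S : Type*} [CommRing k] {I I' : Set S}

/-- The `k`-linear span `kI` of a subset `I` of `S` in the monoid algebra `kS`. -/
noncomputable def linearSpan (k : Type*) [CommRing k] (I : Set S) :
    Submodule k (MonoidAlgebra k S) :=
  Submodule.span k {y | ∃ s ∈ I, y = MonoidAlgebra.single s (1 : k)}

theorem single_mem_linearSpan {s : S} (hs : s ∈ I) (c : k) :
    MonoidAlgebra.single s c ∈ linearSpan k I := by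
  rw [← mul_one c, ← smul_eq_mul, ← MonoidAlgebra.smul_single]
  exact Submodule.smul_mem _ _ (Submodule.subset_span ⟨s, hs, rfl⟩)

theorem linearSpan_mono (h : I' ⊆ I) : linearSpan k I' ≤ linearSpan k I :=
  Submodule.span_mono fun _ ⟨s, hs, hy⟩ ↦ ⟨s, h hs, hy⟩

theorem mem_linearSpan_iff {x : MonoidAlgebra k S} :
    x ∈ linearSpan k I ↔ ∀ s ∉ I, x.coeff s = 0 := by
  classical
  refine ⟨fun hx s hs ↦ ?_, fun hx ↦ ?_⟩
  · induction hx using Submodule.span_induction with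
    | mem y hy =>
      obtain ⟨t, ht, rfl⟩ := hy
      rw [MonoidAlgebra.coeff_single, Finsupp.single_eq_of_ne]
      rintro rfl
      exact hs ht
    | zero => rfl
    | add x y _ _ hx hy => rw [MonoidAlgebra.coeff_add, Finsupp.add_apply, hx, hy, add_zero]
    | smul c x _ hx => rw [MonoidAlgebra.coeff_smul, Finsupp.smul_apply, hx, smul_zero]
  · rw [← MonoidAlgebra.sum_coeff_single x]
    exact Submodule.sum_mem _ fun s hs ↦ single_mem_linearSpan
      (by_contra fun h ↦ Finsupp.mem_support_iff.1 hs (hx s h)) _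

variable [Monoid S] {e : S} {T : Set S}

open Pointwise in
theorem linearSpan_mul_linearSpan_le (I J : Set S) :
    linearSpan k I * linearSpan k J ≤ linearSpan k (I * J) := by
  rw [linearSpan, linearSpan, Submodule.span_mul_span, Submodule.span_le]
  rintro _ ⟨_, ⟨s, hs, rfl⟩, _, ⟨t, ht, rfl⟩, rfl⟩
  simpa only [MonoidAlgebra.single_mul_single, SetLike.mem_coe] using
    single_mem_linearSpan (Set.mul_mem_mul hs ht) (1 * 1 : k)

theorem IsSemigroupIdeal.mul_mem_linearSpan (hI : IsSemigroupIdeal I) {x : MonoidAlgebra k S}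
    (hx : x ∈ linearSpan k I) (b : MonoidAlgebra k S) :
    x * b ∈ linearSpan k I ∧ b * x ∈ linearSpan k I := by
  have hb : b ∈ linearSpan k Set.univ := mem_linearSpan_iff.2 fun s hs ↦ (hs trivial).elim
  exact ⟨linearSpan_mono (Set.mul_subset_iff.2 fun s hs t _ ↦ (hI s hs t).1)
      (linearSpan_mul_linearSpan_le _ _ (Submodule.mul_mem_mul hx hb)),
    linearSpan_mono (Set.mul_subset_iff.2 fun t _ s hs ↦ (hI s hs t).2)
      (linearSpan_mul_linearSpan_le _ _ (Submodule.mul_mem_mul hb hx))⟩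

/-- The two-sided ideal `kI` of `kS`, as an ideal of the opposite ring: left modules over
`(kS)ᵐᵒᵖ` encode right `kS`-modules. -/
def IsSemigroupIdeal.opIdeal (k : Type*) [CommRing k] (hI : IsSemigroupIdeal I) :
    Ideal (MonoidAlgebra k S)ᵐᵒᵖ where
  carrier := {x | x.unop ∈ linearSpan k I}
  add_mem' {x y} (hx : x.unop ∈ linearSpan k I) (hy : y.unop ∈ linearSpan k I) := add_mem hx hy
  zero_mem' := zero_mem (linearSpan k I)
  smul_mem' b _ hx := (hI.mul_mem_linearSpan hx b.unop).1

theorem IsSemigroupIdeal.mem_opIdeal {hI : IsSemigroupIdeal I} {x : (MonoidAlgebra k S)ᵐᵒᵖ} :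
    x ∈ hI.opIdeal k ↔ x.unop ∈ linearSpan k I := by
  rfl

theorem IsSemigroupIdeal.opIdeal_smul_top (hI : IsSemigroupIdeal I) :
    hI.opIdeal k • (⊤ : Submodule _ (MonoidAlgebra k S)ᵐᵒᵖ) = hI.opIdeal k :=
  have : (hI.opIdeal k).IsTwoSided :=
    ⟨fun b hx ↦ mem_opIdeal.2 (hI.mul_mem_linearSpan (mem_opIdeal.1 hx) b.unop).2⟩
  Ideal.mul_top _

theorem coeff_mul_single_idempotent (he : IsIdempotentElem e) (x : MonoidAlgebra k S) {l : S}
    (hl : (x * MonoidAlgebra.single e (1 : k)).coeff l ≠ 0) : l * e = l := by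
  contrapose! hl
  refine MonoidAlgebra.coeff_mul_single_of_forall_mul_ne _ _ fun d hd ↦ hl ?_
  rw [← hd, mul_assoc, he]

theorem IsTransversal.coeff_sum_mul_single [Fintype T] (hT : IsTransversal e T)
    (he : IsIdempotentElem e) (x : T → MonoidAlgebra k S) {l : S} (hl : l * e = l) (hel : JLE e l)
    (r : T) :
    (∑ r' : T, x r' * MonoidAlgebra.single e (1 : k) * MonoidAlgebra.single r'.1 1).coeff
      (l * r) = (x r * MonoidAlgebra.single e (1 : k)).coeff l := by
  rw [MonoidAlgebra.coeff_sum, Finsupp.finsetSum_apply, Finset.sum_eq_single r]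
  · rw [MonoidAlgebra.coeff_mul_single_eq_coeff_mul l, mul_one]
    refine fun m hm ↦ ⟨fun h ↦ ?_, fun h ↦ by rw [h]⟩
    rw [← coeff_mul_single_idempotent he _ (Finsupp.mem_support_iff.1 hm)]
    exact (hT.eq_of_mul_eq hl hel r.2 r.2 he h).1
  · refine fun r' _ hr' ↦ MonoidAlgebra.coeff_mul_single_of_forall_mul_ne _ _ fun d hd ↦ hr' ?_
    exact Subtype.ext (hT.eq_of_mul_eq hl hel r.2 r'.2 he hd).2
  · exact fun h ↦ (h (Finset.mem_univ r)).elim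

theorem IsStratum.independentModulo [Fintype T] (h : IsStratum I' I e) (hI : IsSemigroupIdeal I)
    (hT : IsTransversal e T) :
    IndependentModulo (h.isSemigroupIdeal.opIdeal k) (.op (.single e (1 : k)))
      (fun r : T ↦ .op (.single r.1 (1 : k))) (MonoidAlgebra k S)ᵐᵒᵖ := by
  intro z hz r
  rw [IsSemigroupIdeal.opIdeal_smul_top, IsSemigroupIdeal.mem_opIdeal, mem_linearSpan_iff] at hz ⊢
  intro l hl
  by_contra hne
  have hle : l * e = l := coeff_mul_single_idempotent h.isIdempotentElem _ hne
  have hel : JLE e l := h.jle_of_notMem hI hle hl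
  have hlr : l * r ∉ I' := (h.diff_eq.ge (hT.bijOn.mapsTo (x := (l, r.1)) ⟨⟨hle, hel⟩, r.2⟩)).2
  refine hne ?_
  rw [smul_eq_mul, MulOpposite.unop_mul, MulOpposite.unop_op,
    ← hT.coeff_sum_mul_single h.isIdempotentElem (fun r ↦ (z r).unop) hle hel]
  simpa using hz _ hlr

theorem IsStratum.exists_sub_sum_mem_linearSpan [Fintype T] (h : IsStratum I' I e)
    (hT : IsTransversal e T) {x : MonoidAlgebra k S} (hx : x ∈ linearSpan k I) :
    ∃ a : T → MonoidAlgebra k S,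
      x - ∑ r, a r * MonoidAlgebra.single e (1 : k) * MonoidAlgebra.single r.1 1 ∈
        linearSpan k I' := by
  classical
  induction hx using Submodule.span_induction with
  | mem y hy =>
    obtain ⟨s, hs, rfl⟩ := hy
    by_cases hs' : s ∈ I'
    · exact ⟨0, by simpa using single_mem_linearSpan hs' 1⟩
    · obtain ⟨⟨l, r⟩, ⟨⟨hl, -⟩, hr⟩, hlr⟩ := hT.bijOn.surjOn (h.diff_eq.le ⟨hs, hs'⟩)
      refine ⟨Pi.single ⟨r, hr⟩ (.single l 1), ?_⟩
      rw [Finset.sum_eq_single_of_mem ⟨r, hr⟩ (Finset.mem_univ _) fun r' _ hr' ↦ by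
        rw [Pi.single_eq_of_ne hr', zero_mul, zero_mul]]
      simp only [Pi.single_eq_same, MonoidAlgebra.single_mul_single, hl, mul_one, ← hlr, sub_self,
        zero_mem]
  | zero => exact ⟨0, by simp⟩
  | add x y _ _ hx hy =>
    obtain ⟨a, ha⟩ := hx
    obtain ⟨b, hb⟩ := hy
    refine ⟨a + b, ?_⟩
    simpa only [Pi.add_apply, add_mul, Finset.sum_add_distrib, add_sub_add_comm] using
      add_mem ha hb
  | smul c x _ hx =>
    obtain ⟨a, ha⟩ := hx
    refine ⟨c • a, ?_⟩
    simpa only [Pi.smul_apply, smul_mul_assoc, ← Finset.smul_sum, ← smul_sub] using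
      Submodule.smul_mem _ c ha

theorem IsStratum.isFreeStratum [Fintype T] (h : IsStratum I' I e) (hI : IsSemigroupIdeal I)
    (hT : IsTransversal e T) :
    IsFreeStratum (h.isSemigroupIdeal.opIdeal k) (hI.opIdeal k) (.op (.single e (1 : k)))
      fun r : T ↦ .op (.single r.1 (1 : k)) where
  le _ hx := linearSpan_mono h.subset hx
  mem := single_mem_linearSpan h.mem 1
  translate_mem r := single_mem_linearSpan (hT.mul_eq r r.2 ▸ (hI e h.mem r).1) 1
  generates x hx := by
    obtain ⟨a, ha⟩ := h.exists_sub_sum_mem_linearSpan hT hx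
    refine ⟨fun r ↦ .op (a r), ?_⟩
    rw [IsSemigroupIdeal.mem_opIdeal]
    simpa only [MulOpposite.unop_sub, Finset.unop_sum, MulOpposite.unop_mul, MulOpposite.unop_op]
      using ha
  independent := h.independentModulo hI hT

end MonoidAlgebra

theorem IsSemigroupIdeal.isStratified_opIdeal {k S : Type u} [CommRing k] [Monoid S] [Finite S]
    {I : Set S} (hreg : ∀ s ∈ I, ∃ t : S, s * t * s = s) (hI : IsSemigroupIdeal I) :
    IsStratified (hI.opIdeal k) := by
  induction I using WellFoundedLT.induction with
  | ind I ih =>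
    obtain rfl | hne := I.eq_empty_or_nonempty
    · have hbot : hI.opIdeal k = ⊥ := (Submodule.eq_bot_iff _).2 fun x hx ↦
        MulOpposite.unop_injective <| MonoidAlgebra.ext <| Finsupp.ext fun s ↦
          mem_linearSpan_iff.1 hx s id
      exact hbot ▸ .bot
    · obtain ⟨I', e, h⟩ := exists_isStratum hreg hI hne
      obtain ⟨T, hT⟩ := exists_isTransversal h.isIdempotentElem
      have := Fintype.ofFinite T
      exact .step (ih I' h.ssubset (fun s hs ↦ hreg s (h.subset hs)) h.isSemigroupIdeal)
        (h.isFreeStratum hI hT)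

theorem IsSemigroupIdeal.ker_op_eq_opIdeal {k S : Type*} [CommRing k] [Monoid S] {I : Set S}
    (hI : IsSemigroupIdeal I) {B : Type*} [Ring B] {π : MonoidAlgebra k S →+* B}
    (hker : (RingHom.ker π : Set (MonoidAlgebra k S)) = linearSpan k I) :
    RingHom.ker (RingHom.op π) = hI.opIdeal k :=
  Ideal.ext fun x ↦ (MulOpposite.op_eq_zero_iff (π x.unop)).trans (Set.ext_iff.1 hker x.unop)

open scoped ModuleCat.Algebra in
theorem stmt5_general {k S : Type u} [CommRing k] [Monoid S] [Finite S] {I : Set S}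
    (hreg : ∀ s ∈ I, ∃ t : S, s * t * s = s) (hI : IsSemigroupIdeal I) :
    (∀ x ∈ linearSpan k I, ∀ b, x * b ∈ linearSpan k I ∧ b * x ∈ linearSpan k I) ∧
    ∀ (B : Type u) [Ring B] [Algebra k B] (π : MonoidAlgebra k S →ₐ[k] B),
      Function.Surjective π →
      (RingHom.ker π : Set (MonoidAlgebra k S)) = linearSpan k I →
      ∀ (M N : ModuleCat.{u} Bᵐᵒᵖ) (n : ℕ),
        Nonempty
          (((Ext k (ModuleCat.{u} (MonoidAlgebra k S)ᵐᵒᵖ) n).obj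
              (.op ((ModuleCat.restrictScalars (RingHom.op π.toRingHom)).obj M))).obj
                ((ModuleCat.restrictScalars (RingHom.op π.toRingHom)).obj N) ≅
            ((Ext k (ModuleCat.{u} Bᵐᵒᵖ) n).obj (.op M)).obj N) := by
  refine ⟨fun x hx b ↦ hI.mul_mem_linearSpan hx b, fun B _ _ π hπ hker M N n ↦ ⟨?_⟩⟩
  have hop : Function.Surjective (AlgHom.op π) :=
    MulOpposite.op_surjective.comp (hπ.comp MulOpposite.unop_surjective)
  have hstrat : IsStratified (RingHom.ker (AlgHom.op π).toRingHom) :=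
    (hI.ker_op_eq_opIdeal (π := π.toRingHom) hker).symm ▸ hI.isStratified_opIdeal hreg
  exact hstrat.extIso hop M N n

/-- let `S` be a finite regular monoid, `k` a field and `I ⊆ S` a two-sided
semigroup ideal.  Then the `k`-span `kI` of `I` in the monoid algebra `kS` is a two-sided
ideal of `kS`, and for every realization `B ≅ kS/kI` (a surjective `k`-algebra map
`π : kS → B` with kernel `kI`), all finitely generated right `B`-modules `M, N` and all
`n ≥ 0`, one has `Ext^n_{kS}(M, N) ≅ Ext^n_{kS/kI}(M, N)`. -/
theorem stmt5 (k : Type) [Field k] (S : Type) [Monoid S] [Finite S]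
    (hreg : ∀ s : S, ∃ t : S, s * t * s = s)
    (I : Set S) (hne : I.Nonempty)
    (hIdeal : ∀ a ∈ I, ∀ s : S, a * s ∈ I ∧ s * a ∈ I) :
    (∀ x ∈ Submodule.span k
        {y : MonoidAlgebra k S | ∃ s ∈ I, y = MonoidAlgebra.single s (1 : k)},
      ∀ b : MonoidAlgebra k S,
        x * b ∈ Submodule.span k
          {y : MonoidAlgebra k S | ∃ s ∈ I, y = MonoidAlgebra.single s (1 : k)} ∧
        b * x ∈ Submodule.span k
          {y : MonoidAlgebra k S | ∃ s ∈ I, y = MonoidAlgebra.single s (1 : k)}) ∧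
    (∀ (B : Type) [Ring B] [Algebra k B] (π : MonoidAlgebra k S →ₐ[k] B),
      Function.Surjective π →
      (RingHom.ker π : Set (MonoidAlgebra k S)) =
        (Submodule.span k
          {y : MonoidAlgebra k S | ∃ s ∈ I, y = MonoidAlgebra.single s (1 : k)} : Set _) →
      ∀ (M N : ModuleCat Bᵐᵒᵖ), Module.Finite Bᵐᵒᵖ M → Module.Finite Bᵐᵒᵖ N → ∀ n : ℕ,
        Nonempty
          ((((Ext k (ModuleCat (MonoidAlgebra k S)ᵐᵒᵖ) n).obj
                (Opposite.op ((ModuleCat.restrictScalars (RingHom.op π.toRingHom)).obj M))).obj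
              ((ModuleCat.restrictScalars (RingHom.op π.toRingHom)).obj N)) ≅
            (((Ext k (ModuleCat Bᵐᵒᵖ) n).obj (Opposite.op M)).obj N))) := by
  have h := stmt5_general (k := k) (fun s _ ↦ hreg s) hIdeal
  exact ⟨h.1, fun B _ _ π hπ hker M N _ _ n ↦ h.2 B π hπ hker M N n⟩
end
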